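/- Let S be the circle ℝ/ℤ and let P be the Markov operator generated by π(y,·) = δ_{2y} for y ∈ [0,1/2) and π(y,·) = (1/2)δ_0 + (1/2)δ_{2y−1} for y ∈ [1/2,1). Then P does not have the e-property in C_b(S) at any dyadic rational point z (any z ∈ [0,1) with only finitely many binary digits equal to 1): there exists a bounded Lipschitz function f on S with f(0) = 0 and f(1/2) = 1 such that lim sup_{x→z} sup_{n∈ℕ} |Uⁿf(x) − Uⁿf(z)| ≥ 2^{−m}, where m is the number of digits equal to 1 in the binary expansion of z. Consequently, the set of points at which this asymptotically stable Markov-Feller operator fails the e-property in C_b(S) is dense in S. -/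

import Mathlib

open MeasureTheory Filter Topology

/-- The representative in `[0,1)` of a point of the circle `ℝ/ℤ`. -/
noncomputable def circleRep (x : UnitAddCircle) : ℝ :=
  ((AddCircle.equivIco (1 : ℝ) 0) x : ℝ)

/-- The transition probability function `π(y,·) = δ_{2y}` for `y ∈ [0,1/2)` and
`π(y,·) = (1/2)δ₀ + (1/2)δ_{2y−1}` for `y ∈ [1/2,1)` (arithmetic modulo 1, so that
`δ_{2y−1} = δ_{2y}` on the circle). -/
noncomputable def circleKer (y : UnitAddCircle) : Measure UnitAddCircle :=
  if circleRep y < 1 / 2 then Measure.dirac (y + y)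
  else (1 / 2 : ENNReal) • Measure.dirac (0 : UnitAddCircle) +
    (1 / 2 : ENNReal) • Measure.dirac (y + y)

/-- The `n`-step evolution of a measure under the Markov operator generated by
`circleKer`. -/
noncomputable def circleP : ℕ → Measure UnitAddCircle → Measure UnitAddCircle
  | 0, μ => μ
  | n + 1, μ => (circleP n μ).bind circleKer

/-- The `n`-th iterate of the dual operator: `Uⁿf(x) = ∫ f d(Pⁿδₓ)`. -/
noncomputable def circleU (n : ℕ) (f : UnitAddCircle → ℝ) (x : UnitAddCircle) : ℝ :=
  ∫ y, f y ∂(circleP n (Measure.dirac x))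

/-- The `i`-th binary digit `e_{i+1}(x)` of a real number `x ∈ [0,1)` (the expansion with
infinitely many digits equal to `0`). -/
noncomputable def binDigit (x : ℝ) (i : ℕ) : ℕ := (⌊x * 2 ^ (i + 1)⌋).toNat % 2

/-- The e-property in `C_b(S)` of the circle operator at a point `z`. -/
def CircleEPropCbAt (z : UnitAddCircle) : Prop :=
  ∀ f : UnitAddCircle → ℝ, Continuous f → (∃ C : ℝ, ∀ x, |f x| ≤ C) →
    Tendsto (fun x => ⨆ n : ℕ, |circleU n f x - circleU n f z|) (𝓝 z) (𝓝 0)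

/-!
The point doubles at every step, and whenever its leading binary digit is `1`, half of the mass
drops to the fixed point `0`. So started at `x`, the chain has after `n` steps mass `2⁻ᶜ` at `2ⁿ x`
and the rest at `0`, where `c` is the number of ones among the first `n` digits of `x`. If `z` is
dyadic with `m` ones and `2ᵏ z = 0`, then `z` and `z + 2⁻⁽ᵏ⁺¹⁾` have the same first `k` digits, so
after `k` steps their laws are `δ₀` and `2⁻ᵐ δ_{1/2} + (1 - 2⁻ᵐ) δ₀`. These stay apart as `k → ∞`,
although `z + 2⁻⁽ᵏ⁺¹⁾ → z`.
-/

theorem circleRep_mem_Ico (x : UnitAddCircle) : circleRep x ∈ Set.Ico 0 1 := by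
  simpa only [circleRep, zero_add] using (AddCircle.equivIco (1 : ℝ) 0 x).2

theorem coe_circleRep (x : UnitAddCircle) : (circleRep x : UnitAddCircle) = x :=
  AddCircle.coe_equivIco

theorem circleRep_coe (r : ℝ) : circleRep r = Int.fract r := by
  simp [circleRep]

theorem circleRep_coe_of_mem_Ico {r : ℝ} (hr : r ∈ Set.Ico 0 1) : circleRep r = r :=
  (circleRep_coe r).trans (Int.fract_eq_self.2 hr)

theorem circleRep_zero : circleRep 0 = 0 :=
  circleRep_coe_of_mem_Ico (r := 0) (by simp)

theorem circleRep_nsmul (n : ℕ) (x : UnitAddCircle) :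
    circleRep (n • x) = Int.fract (n * circleRep x) := by
  conv_lhs => rw [← coe_circleRep x, ← AddCircle.coe_nsmul, circleRep_coe, nsmul_eq_mul]

theorem measurable_circleRep : Measurable circleRep :=
  measurable_subtype_coe.comp (AddCircle.measurableEquivIco 1 0).measurable

theorem binDigit_eq_digits (r : ℝ) (i : ℕ) : binDigit r i = Real.digits r 2 i := by
  simp [binDigit, Real.digits, Int.floor_toNat]

theorem binDigit_eq_floor_div (r : ℝ) {i k : ℕ} (hik : i < k) :
    binDigit r i = ⌊r * 2 ^ k⌋₊ / 2 ^ (k - (i + 1)) % 2 := by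
  have hscale : r * 2 ^ (i + 1) = r * 2 ^ k / (2 ^ (k - (i + 1)) : ℕ) := by
    rw [eq_div_iff (by positivity), mul_assoc, Nat.cast_pow, Nat.cast_ofNat, ← pow_add,
      Nat.add_sub_cancel' hik]
  rw [binDigit, Int.floor_toNat, hscale, Nat.floor_div_natCast]

theorem binDigit_eq_one_iff {r : ℝ} (hr : 0 ≤ r) (i : ℕ) :
    binDigit r i = 1 ↔ 1 / 2 ≤ Int.fract (2 ^ i * r) := by
  have hdouble : r * 2 ^ (i + 1) = ↑(2 * ⌊2 ^ i * r⌋) + 2 * Int.fract (2 ^ i * r) := by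
    push_cast
    linear_combination -2 * Int.floor_add_fract (2 ^ i * r)
  have hfloor : 0 ≤ ⌊2 ^ i * r⌋ := by positivity
  have hnonneg := Int.fract_nonneg (2 ^ i * r)
  have hlt_one := Int.fract_lt_one (2 ^ i * r)
  rw [binDigit, hdouble, Int.floor_intCast_add]
  rcases lt_or_ge (Int.fract (2 ^ i * r)) (1 / 2) with hlt | hge
  · have : ⌊2 * Int.fract (2 ^ i * r)⌋ = 0 := by
      rw [Int.floor_eq_zero_iff]; constructor <;> linarith
    simp only [hlt.not_ge, iff_false]
    omega
  · have : ⌊2 * Int.fract (2 ^ i * r)⌋ = 1 := by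
      rw [Int.floor_eq_iff]; constructor <;> push_cast <;> linarith
    simp only [hge, iff_true]
    omega

theorem binDigit_circleRep_eq_one_iff (x : UnitAddCircle) (i : ℕ) :
    binDigit (circleRep x) i = 1 ↔ 1 / 2 ≤ circleRep (2 ^ i • x) := by
  rw [binDigit_eq_one_iff (circleRep_mem_Ico x).1, circleRep_nsmul, Nat.cast_pow, Nat.cast_ofNat]

theorem two_pow_mul_eq_floor_of_binDigit_ne_one {r : ℝ} (hr : r ∈ Set.Ico 0 1) {k : ℕ}
    (hk : ∀ i ≥ k, binDigit r i ≠ 1) : 2 ^ k * r = ⌊2 ^ k * r⌋₊ := by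
  have hterm : ∀ i ∉ Finset.range k, Real.ofDigitsTerm (Real.digits r 2) i = 0 := fun i hi => by
    have hdigit := hk i (by simpa using hi)
    rw [binDigit_eq_digits] at hdigit
    simp [Real.ofDigitsTerm, show Real.digits r 2 i = 0 by omega]
  have hsum := (Real.hasSum_ofDigitsTerm_digits r one_lt_two hr).unique
    (hasSum_sum_of_ne_finset_zero hterm)
  have hfloor := Real.ofDigits_digits_sum_eq (b := 2) hr k
  rwa [← hsum, Nat.cast_ofNat] at hfloor

theorem two_pow_nsmul_eq_zero_iff {x : UnitAddCircle} {k : ℕ} :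
    2 ^ k • x = 0 ↔ ∀ i ≥ k, binDigit (circleRep x) i ≠ 1 := by
  refine ⟨fun hx i hi => ?_, fun hk => ?_⟩
  · have hzero : 2 ^ i • x = 0 := by
      rw [← Nat.sub_add_cancel hi, pow_add, mul_nsmul', hx, nsmul_zero]
    rw [ne_eq, binDigit_circleRep_eq_one_iff, hzero, circleRep_zero]
    norm_num
  · have hfloor := two_pow_mul_eq_floor_of_binDigit_ne_one (circleRep_mem_Ico x) hk
    rw [← coe_circleRep x, ← AddCircle.coe_nsmul, AddCircle.coe_eq_zero_iff]
    exact ⟨⌊2 ^ k * circleRep x⌋₊, by simpa using hfloor.symm⟩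

theorem finite_setOf_binDigit_eq_one_iff {x : UnitAddCircle} :
    {i | binDigit (circleRep x) i = 1}.Finite ↔ ∃ k, 2 ^ k • x = 0 := by
  simp_rw [two_pow_nsmul_eq_zero_iff]
  refine ⟨fun h => ?_, fun ⟨k, hk⟩ => (Set.finite_lt_nat k).subset fun i hi => ?_⟩
  · obtain ⟨N, hN⟩ := h.bddAbove
    exact ⟨N + 1, fun i hi hdigit => (hN hdigit).not_gt hi⟩
  · exact not_le.1 fun hki => hk i hki hi

theorem binDigit_circleRep_add_coe {z : UnitAddCircle} {k i : ℕ} (hz : 2 ^ k • z = 0)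
    (hik : i < k) {t : ℝ} (ht : 0 ≤ t) (htk : t < 1 / 2 ^ k) :
    binDigit (circleRep (z + t)) i = binDigit (circleRep z) i := by
  obtain ⟨m, hm, rfl⟩ := (AddCircle.nsmul_eq_zero_iff (by positivity)).1 hz
  simp only [Nat.cast_pow, Nat.cast_ofNat, mul_one, ← AddCircle.coe_add]
  have hsum_lt : (m : ℝ) / 2 ^ k + t < 1 := by
    have hm' : (m + 1 : ℝ) ≤ 2 ^ k := by exact_mod_cast hm
    calc (m : ℝ) / 2 ^ k + t < m / 2 ^ k + 1 / 2 ^ k := by gcongr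
      _ = (m + 1) / 2 ^ k := (add_div ..).symm
      _ ≤ 1 := (div_le_one (by positivity)).2 hm'
  have hmul : t * 2 ^ k < 1 := (lt_div_iff₀ (by positivity)).1 htk
  have hfloor : ⌊((m : ℝ) / 2 ^ k + t) * 2 ^ k⌋₊ = m := by
    rw [add_mul, div_mul_cancel₀ _ (by positivity), Nat.floor_eq_iff (by positivity)]
    constructor <;> nlinarith [mul_nonneg ht (by positivity : (0 : ℝ) ≤ 2 ^ k)]
  rw [circleRep_coe_of_mem_Ico ⟨by positivity, hsum_lt⟩,
    circleRep_coe_of_mem_Ico ⟨by positivity, by linarith⟩, binDigit_eq_floor_div _ hik,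
    binDigit_eq_floor_div _ hik, hfloor, div_mul_cancel₀ _ (by positivity), Nat.floor_natCast]

/-- The number of ones among the first `n` binary digits of the representative of `x` in `[0,1)`:
the number of steps before time `n` at which the chain started at `x` may jump to `0`. -/
noncomputable def binOnes (x : UnitAddCircle) (n : ℕ) : ℕ :=
  Nat.count (fun i => binDigit (circleRep x) i = 1) n

theorem binOnes_succ (x : UnitAddCircle) (n : ℕ) :
    binOnes x (n + 1) = binOnes x n + if circleRep (2 ^ n • x) < 1 / 2 then 0 else 1 := by
  simp only [binOnes, Nat.count_succ, binDigit_circleRep_eq_one_iff, ← not_lt, ite_not]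

theorem binOnes_eq_ncard {z : UnitAddCircle} {k : ℕ} (hz : 2 ^ k • z = 0) :
    binOnes z k = {i | binDigit (circleRep z) i = 1}.ncard := by
  rw [binOnes, Nat.count_eq_card_filter_range, ← Set.ncard_coe_finset]
  congr 1
  ext i
  simp only [Finset.coe_filter, Finset.mem_range, Set.mem_ofPred_eq, and_iff_right_iff_imp]
  exact fun hi => not_le.1 fun hki => two_pow_nsmul_eq_zero_iff.1 hz i hki hi

theorem binOnes_add_coe {z : UnitAddCircle} {k : ℕ} (hz : 2 ^ k • z = 0) {t : ℝ} (ht : 0 ≤ t)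
    (htk : t < 1 / 2 ^ k) : binOnes (z + t) k = binOnes z k := by
  simp only [binOnes, Nat.count_eq_card_filter_range]
  congr 1
  exact Finset.filter_congr fun i hi => by
    rw [binDigit_circleRep_add_coe hz (Finset.mem_range.1 hi) ht htk]

theorem measurable_circleKer : Measurable circleKer := by
  have hdouble : Measurable fun y : UnitAddCircle => Measure.dirac (y + y) :=
    Measure.measurable_dirac.comp (measurable_id.add measurable_id)
  refine Measurable.ite (measurableSet_lt measurable_circleRep measurable_const) hdouble ?_
  refine Measure.measurable_of_measurable_coe _ fun s hs => ?_
  simp only [Measure.add_apply, Measure.smul_apply, smul_eq_mul]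
  exact (((Measure.measurable_coe hs).comp hdouble).const_mul _).const_add _

theorem circleKer_zero : circleKer 0 = Measure.dirac 0 := by
  simp [circleKer, circleRep_zero]

theorem bind_circleKer_add_smul_dirac (a b : ENNReal) (y : UnitAddCircle) :
    (a • Measure.dirac y + b • Measure.dirac 0).bind circleKer =
      a • circleKer y + b • Measure.dirac 0 := by
  let κ : ProbabilityTheory.Kernel UnitAddCircle UnitAddCircle := ⟨circleKer, measurable_circleKer⟩
  change (a • Measure.dirac y + b • Measure.dirac 0).bind κ = a • κ y + b • Measure.dirac 0
  rw [Measure.comp_add, Measure.bind_smul, Measure.bind_smul, Measure.dirac_bind κ.measurable,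
    Measure.dirac_bind κ.measurable]
  exact congrArg (fun μ => a • κ y + b • μ) circleKer_zero

theorem half_pow_succ_add_one_sub_half_pow (c : ℕ) :
    (1 / 2 : ENNReal) ^ (c + 1) + (1 - (1 / 2) ^ c) = 1 - (1 / 2) ^ (c + 1) := by
  refine ENNReal.eq_sub_of_add_eq (by simp) ?_
  have hle : (1 / 2 : ENNReal) ^ c ≤ 1 := pow_le_one₀ zero_le (by simp)
  have hhalves : (1 / 2 : ENNReal) ^ (c + 1) + (1 / 2) ^ (c + 1) = (1 / 2) ^ c := by
    rw [pow_succ, ← mul_add, ENNReal.add_halves, mul_one]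
  rw [add_right_comm, hhalves, add_tsub_cancel_of_le hle]

theorem circleP_dirac (n : ℕ) (x : UnitAddCircle) :
    circleP n (Measure.dirac x) =
      (1 / 2 : ENNReal) ^ binOnes x n • Measure.dirac (2 ^ n • x) +
        (1 - (1 / 2 : ENNReal) ^ binOnes x n) • Measure.dirac 0 := by
  induction n with
  | zero => simp [circleP, binOnes]
  | succ n ih =>
    have hdouble : 2 ^ n • x + 2 ^ n • x = 2 ^ (n + 1) • x := by
      rw [pow_succ, mul_two, add_nsmul]
    rw [circleP, ih, bind_circleKer_add_smul_dirac, binOnes_succ, circleKer, hdouble]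
    split_ifs
    · rfl
    · rw [smul_add, smul_smul, smul_smul, ← pow_succ, ← half_pow_succ_add_one_sub_half_pow,
        add_smul]
      abel

theorem circleU_eq (n : ℕ) (f : UnitAddCircle → ℝ) (x : UnitAddCircle) :
    circleU n f x =
      (1 / 2) ^ binOnes x n * f (2 ^ n • x) + (1 - (1 / 2) ^ binOnes x n) * f 0 := by
  have hint (a : UnitAddCircle) : Integrable f (Measure.dirac a) := integrable_dirac (by simp)
  have hle : (1 / 2 : ENNReal) ^ binOnes x n ≤ 1 := pow_le_one₀ zero_le (by simp)
  rw [circleU, circleP_dirac, integral_add_measure ((hint _).smul_measure (by simp))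
    ((hint _).smul_measure (by simp))]
  simp only [integral_smul_measure, integral_dirac, ENNReal.toReal_sub_of_le hle ENNReal.one_ne_top,
    ENNReal.toReal_pow, ENNReal.toReal_div, ENNReal.toReal_one, ENNReal.toReal_ofNat, smul_eq_mul]

theorem abs_circleU_le {f : UnitAddCircle → ℝ} {C : ℝ} (hC : ∀ x, |f x| ≤ C) (n : ℕ)
    (x : UnitAddCircle) : |circleU n f x| ≤ C := by
  have hle : (1 / 2 : ℝ) ^ binOnes x n ≤ 1 := pow_le_one₀ (by norm_num) (by norm_num)
  rw [circleU_eq, ← Real.norm_eq_abs, ← mem_closedBall_zero_iff]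
  exact convex_closedBall 0 C (by simpa using hC _) (by simpa using hC 0) (by positivity)
    (sub_nonneg.2 hle) (add_sub_cancel _ _)

theorem circleU_add_sub_circleU {z : UnitAddCircle} {k : ℕ} (hz : 2 ^ k • z = 0)
    (f : UnitAddCircle → ℝ) :
    circleU k f (z + ((1 / 2 ^ (k + 1) : ℝ) : UnitAddCircle)) - circleU k f z =
      (1 / 2) ^ {i | binDigit (circleRep z) i = 1}.ncard *
        (f ((1 / 2 : ℝ) : UnitAddCircle) - f 0) := by
  have hhalf : 2 ^ k • (z + ((1 / 2 ^ (k + 1) : ℝ) : UnitAddCircle)) =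
      ((1 / 2 : ℝ) : UnitAddCircle) := by
    rw [nsmul_add, hz, zero_add, ← AddCircle.coe_nsmul, nsmul_eq_mul, pow_succ]
    congr 1
    push_cast
    field_simp
  have hlt : (1 / 2 ^ (k + 1) : ℝ) < 1 / 2 ^ k :=
    one_div_pow_lt_one_div_pow_of_lt one_lt_two k.lt_succ_self
  rw [circleU_eq, circleU_eq, hhalf, hz, binOnes_add_coe hz (by positivity) hlt,
    binOnes_eq_ncard hz]
  ring

theorem tendsto_add_coe_one_div_two_pow (z : UnitAddCircle) :
    Tendsto (fun k : ℕ => z + ((1 / 2 ^ (k + 1) : ℝ) : UnitAddCircle)) atTop (𝓝 z) := by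
  have hreal : Tendsto (fun k : ℕ => (1 / 2 ^ (k + 1) : ℝ)) atTop (𝓝 0) := by
    simpa [Function.comp_def] using (tendsto_pow_atTop_nhds_zero_of_lt_one
      (r := (2⁻¹ : ℝ)) (by norm_num) (by norm_num)).comp (tendsto_add_atTop_nat 1)
  simpa using (((AddCircle.continuous_mk' (1 : ℝ)).tendsto 0).comp hreal).const_add z

theorem le_limsup_iSup_abs_circleU_sub {z : UnitAddCircle} {k₀ : ℕ} (hz : 2 ^ k₀ • z = 0)
    {f : UnitAddCircle → ℝ} {C : ℝ} (hC : ∀ x, |f x| ≤ C) :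
    (1 / 2) ^ {i | binDigit (circleRep z) i = 1}.ncard *
        |f ((1 / 2 : ℝ) : UnitAddCircle) - f 0| ≤
      limsup (fun x => ⨆ n : ℕ, |circleU n f x - circleU n f z|) (𝓝 z) := by
  have hbound (x : UnitAddCircle) (n : ℕ) : |circleU n f x - circleU n f z| ≤ C + C :=
    (abs_sub _ _).trans (add_le_add (abs_circleU_le hC n x) (abs_circleU_le hC n z))
  refine le_limsup_of_frequently_le ((tendsto_add_coe_one_div_two_pow z).frequently
    (Eventually.frequently ?_)) (isBoundedUnder_of ⟨C + C, fun x => ciSup_le (hbound x)⟩)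
  filter_upwards [eventually_ge_atTop k₀] with k hk
  have hzk : 2 ^ k • z = 0 :=
    two_pow_nsmul_eq_zero_iff.2 fun i hi => two_pow_nsmul_eq_zero_iff.1 hz i (hk.trans hi)
  calc (1 / 2) ^ {i | binDigit (circleRep z) i = 1}.ncard *
        |f ((1 / 2 : ℝ) : UnitAddCircle) - f 0|
      = |circleU k f (z + ((1 / 2 ^ (k + 1) : ℝ) : UnitAddCircle)) - circleU k f z| := by
        rw [circleU_add_sub_circleU hzk, abs_mul, abs_pow, abs_one_div, abs_two]
    _ ≤ _ := le_ciSup (f := fun n => |circleU n f _ - circleU n f z|)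
        ⟨C + C, Set.forall_mem_range.2 (hbound _)⟩ k

theorem exists_lipschitzWith_abs_le_one_apply_half_eq_one :
    ∃ f : UnitAddCircle → ℝ, LipschitzWith 2 f ∧ (∀ x, |f x| ≤ 1) ∧ f 0 = 0 ∧
      f ((1 / 2 : ℝ) : UnitAddCircle) = 1 := by
  refine ⟨fun x => 2 * ‖x‖, ?_, fun x => ?_, by simp, ?_⟩
  · simpa using! (lipschitzWith_smul (2 : ℝ)).comp lipschitzWith_one_norm
  · have hnorm := AddCircle.norm_le_half_period (1 : ℝ) (x := x) one_ne_zero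
    rw [abs_one] at hnorm
    rw [abs_of_nonneg (by positivity)]
    linarith
  · simp only
    rw [AddCircle.norm_half_period_eq, abs_one, mul_one_div_cancel two_ne_zero]

theorem not_circleEPropCbAt_of_two_pow_nsmul_eq_zero {z : UnitAddCircle} {k : ℕ}
    (hz : 2 ^ k • z = 0) : ¬ CircleEPropCbAt z := by
  obtain ⟨f, hlip, hC, hf0, hf⟩ := exists_lipschitzWith_abs_le_one_apply_half_eq_one
  intro hE
  have hle := le_limsup_iSup_abs_circleU_sub hz hC
  rw [(hE f hlip.continuous ⟨1, hC⟩).limsup_eq, hf, hf0, sub_zero, abs_one, mul_one] at hle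
  exact hle.not_gt (by positivity)

theorem dense_setOf_pow_nsmul_eq_zero {p : ℝ} [Fact (0 < p)] {b : ℕ} (hb : 1 < b) :
    Dense {z : AddCircle p | ∃ k : ℕ, b ^ k • z = 0} := by
  let s : AddSubgroup (AddCircle p) :=
    { carrier := {z | ∃ k : ℕ, b ^ k • z = 0}
      zero_mem' := ⟨0, nsmul_zero _⟩
      add_mem' := fun ⟨j, hj⟩ ⟨k, hk⟩ => ⟨j + k, by
        rw [nsmul_add, pow_add, mul_nsmul, hj, mul_nsmul', hk, nsmul_zero, nsmul_zero, add_zero]⟩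
      neg_mem' := fun ⟨k, hk⟩ => ⟨k, by rw [neg_nsmul, hk, neg_zero]⟩ }
  refine (AddCircle.dense_addSubgroup_iff_ne_zmultiples (s := s)).2 fun a ha hs => ?_
  -- A finite cyclic group of order `N` has no element of order `b ^ N > N`.
  set N := addOrderOf a
  have horder : addOrderOf ((p / (b ^ N : ℕ) : ℝ) : AddCircle p) = b ^ N :=
    AddCircle.addOrderOf_period_div (by positivity)
  have hmem : ((p / (b ^ N : ℕ) : ℝ) : AddCircle p) ∈ AddSubgroup.zmultiples a :=
    hs ▸ ⟨N, addOrderOf_dvd_iff_nsmul_eq_zero.1 horder.dvd⟩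
  have hdvd : b ^ N ∣ N := horder ▸ addOrderOf_dvd_of_mem_zmultiples hmem
  exact (Nat.le_of_dvd (Nat.pos_of_ne_zero ha) hdvd).not_gt (Nat.lt_pow_self hb)

/-- The Markov operator on the circle generated by `π(y,·) = δ_{2y}` for `y ∈ [0,1/2)`,
`π(y,·) = (1/2)δ₀ + (1/2)δ_{2y−1}` for `y ∈ [1/2,1)`, fails the e-property in `C_b(S)` at
every dyadic rational `z` (i.e. at every `z` with only finitely many binary digits equal
to `1`): there is a bounded Lipschitz `f` with `f(0) = 0`, `f(1/2) = 1` and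
`limsup_{x→z} sup_n |Uⁿf(x) − Uⁿf(z)| ≥ 2^{−m}`, `m` being the number of digits of `z`
equal to `1`. Consequently, the set of points at which the e-property in `C_b(S)` fails is
dense. -/
theorem circle_not_eProp_at_dyadic :
    (∀ z : UnitAddCircle, {i : ℕ | binDigit (circleRep z) i = 1}.Finite →
      ∃ f : UnitAddCircle → ℝ, (∃ c : NNReal, LipschitzWith c f) ∧
        (∃ C : ℝ, ∀ x, |f x| ≤ C) ∧
        f 0 = 0 ∧ f (((1 : ℝ) / 2 : ℝ) : UnitAddCircle) = 1 ∧
        (2 : ℝ) ^ (-({i : ℕ | binDigit (circleRep z) i = 1}.ncard : ℤ)) ≤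
          Filter.limsup (fun x => ⨆ n : ℕ, |circleU n f x - circleU n f z|) (𝓝 z) ∧
        ¬ CircleEPropCbAt z) ∧
    Dense {z : UnitAddCircle | ¬ CircleEPropCbAt z} := by
  refine ⟨fun z hz => ?_, ?_⟩
  · obtain ⟨k, hk⟩ := finite_setOf_binDigit_eq_one_iff.1 hz
    obtain ⟨f, hlip, hC, hf0, hf⟩ := exists_lipschitzWith_abs_le_one_apply_half_eq_one
    have hle := le_limsup_iSup_abs_circleU_sub hk hC
    rw [hf, hf0, sub_zero, abs_one, mul_one, one_div, inv_pow, ← zpow_natCast, ← zpow_neg] at hle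
    exact ⟨f, ⟨2, hlip⟩, ⟨1, hC⟩, hf0, hf, hle, not_circleEPropCbAt_of_two_pow_nsmul_eq_zero hk⟩
  · refine (dense_setOf_pow_nsmul_eq_zero one_lt_two).mono ?_
    rintro z ⟨k, hk⟩
    exact not_circleEPropCbAt_of_two_pow_nsmul_eq_zero hk
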